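/- (Bernstein inequality for spatial lattice processes.) Let Z = {Z(s) : s ∈ Z^N} be a real-valued random field with α-mixing coefficients {α(k) : k ∈ N_+}, such that each Z(s) is bounded by a uniform constant B, has expectation zero, and variance uniformly bounded by σ². Put ᾱ_k = Σ_{u=1}^k u^{N−1}·α(u). Let P(n), Q(n) be nondecreasing sequences in N_+^N indexed by n ∈ N_+^N with 1 ≤ Q_i(n_i) ≤ P_i(n_i) < Q_i(n_i) + P_i(n_i) < n_i for each 1 ≤ i ≤ N, and set ñ = |I_n| = n_1···n_N, P̃ = P_1(n_1)···P_N(n_N), q̲ = min_i Q_i(n_i), p̄ = max_i P_i(n_i). Then there exists a constant γ depending only on the lattice dimension N such that for all ε > 0 and all β > 0 with 2^{N+1}·B·P̃·e·β < 1: P( |Σ_{s∈I_n} Z(s)| > ε ) ≤ 2·exp{ 12√e·2^N·(ñ/P̃)·α(q̲)^{P̃/[ñ(2^N+1)]} } · exp{ −βε + 2^{3N}·β²·e·(σ² + 12·B²·γ·ᾱ_{p̄})·ñ }. -/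

import Mathlib

open MeasureTheory Filter

noncomputable section

/-- `ℓ∞`-distance between two lattice points of `ℤ^N`. -/
def latDist {N : ℕ} (s t : Fin N → ℤ) : ℕ := Finset.univ.sup fun i => (s i - t i).natAbs

/-- The σ-algebra generated by the random variables `Z(s)`, `s ∈ I`. -/
def fieldSigma {N : ℕ} {Ω E : Type*} [MeasurableSpace E]
    (Z : (Fin N → ℤ) → Ω → E) (I : Set (Fin N → ℤ)) : MeasurableSpace Ω :=
  ⨆ s ∈ I, MeasurableSpace.comap (Z s) inferInstance

/-- The spatial α-mixing coefficient
`α(k) = sup_{d∞(I,J) ≥ k} sup_{A ∈ F(I), B ∈ F(J)} |P(A∩B) − P(A)P(B)|`. -/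
def alphaMix {N : ℕ} {Ω E : Type*} [MeasurableSpace Ω] [MeasurableSpace E]
    (P : Measure Ω) (Z : (Fin N → ℤ) → Ω → E) (k : ℕ) : ℝ :=
  sSup { x : ℝ | ∃ I J : Set (Fin N → ℤ),
    (∀ s ∈ I, ∀ t ∈ J, k ≤ latDist s t) ∧
    ∃ A B : Set Ω, MeasurableSet[fieldSigma Z I] A ∧ MeasurableSet[fieldSigma Z J] B ∧
      x = |(P (A ∩ B)).toReal - (P A).toReal * (P B).toReal| }

/-- `ᾱ_k = Σ_{u=1}^k u^{N−1} α(u)`. -/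
def abar {N : ℕ} {Ω E : Type*} [MeasurableSpace Ω] [MeasurableSpace E]
    (P : Measure Ω) (Z : (Fin N → ℤ) → Ω → E) (k : ℕ) : ℝ :=
  ∑ u ∈ Finset.Icc 1 k, (u : ℝ) ^ (N - 1) * alphaMix P Z u

/-- The observation window `I_n = {s ∈ ℤ^N : e_N ≤ s ≤ n}`. -/
def obsIdx {N : ℕ} (n : Fin N → ℕ) : Finset (Fin N → ℤ) :=
  Finset.Icc (fun _ => 1) (fun i => (n i : ℤ))

theorem integral_mul_le_of_forall_setIntegral_le {Ω : Type*} {m m0 : MeasurableSpace Ω}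
    {P : Measure Ω} [IsProbabilityMeasure P] (hm : m ≤ m0) {X W : Ω → ℝ} {M K : ℝ}
    (hX : Measurable[m] X) (hX0 : ∀ᵐ ω ∂P, 0 ≤ X ω) (hXM : ∀ᵐ ω ∂P, X ω ≤ M) (hM : 0 ≤ M)
    (hW : Integrable W P) (h : ∀ A, MeasurableSet[m] A → ∫ ω in A, W ω ∂P ≤ K) :
    ∫ ω, X ω * W ω ∂P ≤ M * K := by
  have hXb : ∀ᵐ ω ∂P, ‖X ω‖ ≤ M := by
    filter_upwards [hX0, hXM] with ω h0 h1
    rwa [Real.norm_of_nonneg h0]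
  have hXs : StronglyMeasurable[m] X := hX.stronglyMeasurable
  have hXW : Integrable (X * W) P := hW.bdd_mul (hXs.mono hm).aestronglyMeasurable hXb
  have hg : Integrable (P[W|m]) P := integrable_condExp
  have hA : MeasurableSet[m] {ω | 0 < (P[W|m]) ω} :=
    measurableSet_lt measurable_const stronglyMeasurable_condExp.measurable
  have hXg : Integrable (fun ω => X ω * (P[W|m]) ω) P :=
    hg.bdd_mul (hXs.mono hm).aestronglyMeasurable hXb
  calc ∫ ω, X ω * W ω ∂P = ∫ ω, (P[X * W|m]) ω ∂P := (integral_condExp hm).symm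
    _ = ∫ ω, X ω * (P[W|m]) ω ∂P :=
        integral_congr_ae (condExp_mul_of_stronglyMeasurable_left hXs hXW hW)
    _ ≤ ∫ ω, M * {ω | 0 < (P[W|m]) ω}.indicator (P[W|m]) ω ∂P := by
        refine integral_mono_ae hXg ((hg.indicator (hm _ hA)).const_mul M) ?_
        filter_upwards [hX0, hXM] with ω h0 h1
        by_cases hω : 0 < (P[W|m]) ω
        · simp only [Set.indicator, Set.mem_ofPred_eq, hω, if_true]
          exact mul_le_mul_of_nonneg_right h1 hω.le
        · simp only [Set.indicator, Set.mem_ofPred_eq, hω, if_false, mul_zero]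
          exact mul_nonpos_of_nonneg_of_nonpos h0 (not_lt.mp hω)
    _ = M * ∫ ω in {ω | 0 < (P[W|m]) ω}, W ω ∂P := by
        rw [integral_const_mul, integral_indicator (hm _ hA), setIntegral_condExp hm hW hA]
    _ ≤ M * K := mul_le_mul_of_nonneg_left (h _ hA) hM

theorem integral_mul_le_of_mixing {Ω : Type*} {F G m0 : MeasurableSpace Ω}
    {P : Measure Ω} [IsProbabilityMeasure P] (hF : F ≤ m0) (hG : G ≤ m0) {X Y : Ω → ℝ}
    {M₁ M₂ a : ℝ} (hX : Measurable[F] X) (hY : Measurable[G] Y)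
    (hX0 : ∀ᵐ ω ∂P, 0 ≤ X ω) (hX1 : ∀ᵐ ω ∂P, X ω ≤ M₁)
    (hY0 : ∀ᵐ ω ∂P, 0 ≤ Y ω) (hY1 : ∀ᵐ ω ∂P, Y ω ≤ M₂) (hM₁ : 0 ≤ M₁) (hM₂ : 0 ≤ M₂)
    (h : ∀ A B, MeasurableSet[F] A → MeasurableSet[G] B →
      P.real (A ∩ B) ≤ P.real A * P.real B + a) :
    ∫ ω, X ω * Y ω ∂P ≤ (∫ ω, X ω ∂P) * (∫ ω, Y ω ∂P) + a * M₁ * M₂ := by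
  have hXi : Integrable X P := by
    refine Integrable.of_bound (hX.mono hF le_rfl).aestronglyMeasurable M₁ ?_
    filter_upwards [hX0, hX1] with ω h0 h1
    rwa [Real.norm_of_nonneg h0]
  have hYi : Integrable Y P := by
    refine Integrable.of_bound (hY.mono hG le_rfl).aestronglyMeasurable M₂ ?_
    filter_upwards [hY0, hY1] with ω h0 h1
    rwa [Real.norm_of_nonneg h0]
  have hXY : Integrable (fun ω => X ω * Y ω) P := by
    refine hYi.bdd_mul (hX.mono hF le_rfl).aestronglyMeasurable (c := M₁) ?_
    filter_upwards [hX0, hX1] with ω h0 h1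
    rwa [Real.norm_of_nonneg h0]
  have key : ∀ A, MeasurableSet[F] A → ∫ ω in A, (Y ω - ∫ ω, Y ω ∂P) ∂P ≤ M₂ * a := by
    intro A hA
    have hAi : Integrable (A.indicator (fun _ => (1 : ℝ))) P :=
      (integrable_const 1).indicator (hF _ hA)
    have h2 := integral_mul_le_of_forall_setIntegral_le (P := P) hG hY hY0 hY1 hM₂
      (W := fun ω => A.indicator (fun _ => (1 : ℝ)) ω - P.real A) (K := a)
      (hAi.sub (integrable_const _)) (by
        intro B hB
        rw [integral_sub hAi.integrableOn (integrable_const _).integrableOn,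
          setIntegral_indicator (hF _ hA)]
        simp only [setIntegral_const, smul_eq_mul, mul_one]
        have := h A B hA hB
        rw [Set.inter_comm] at this
        linarith [mul_comm (P.real A) (P.real B)])
    have h3 : ∫ ω, Y ω * (A.indicator (fun _ => (1 : ℝ)) ω - P.real A) ∂P
        = ∫ ω in A, (Y ω - ∫ ω, Y ω ∂P) ∂P := by
      rw [integral_sub hYi.integrableOn (integrable_const _).integrableOn, setIntegral_const,
        ← integral_indicator (hF _ hA), smul_eq_mul, mul_comm, ← integral_mul_const,
        ← integral_sub (hYi.indicator (hF _ hA)) (hYi.mul_const _)]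
      congr 1
      ext ω
      by_cases hω : ω ∈ A <;> simp [hω, mul_sub]
    rwa [h3] at h2
  have h4 := integral_mul_le_of_forall_setIntegral_le hF hX hX0 hX1 hM₁
    (W := fun ω => Y ω - ∫ ω, Y ω ∂P) (hYi.sub (integrable_const _)) key
  have h5 : ∫ ω, X ω * (Y ω - ∫ ω, Y ω ∂P) ∂P
      = ∫ ω, X ω * Y ω ∂P - (∫ ω, X ω ∂P) * (∫ ω, Y ω ∂P) := by
    rw [← integral_mul_const, ← integral_sub hXY (hXi.mul_const _)]
    simp only [mul_sub]
  rw [h5] at h4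
  linarith [mul_assoc a M₁ M₂, mul_comm a (M₁ * M₂), mul_assoc M₁ M₂ a]

section AlphaMix

variable {N : ℕ} {Ω : Type*} {Z : (Fin N → ℤ) → Ω → ℝ}

theorem measurable_fieldSigma {I : Set (Fin N → ℤ)} {s : Fin N → ℤ} (hs : s ∈ I) :
    Measurable[fieldSigma Z I] (Z s) :=
  measurable_iff_comap_le.mpr (le_iSup₂_of_le s hs le_rfl)

theorem measurable_sum_fieldSigma {I : Set (Fin N → ℤ)} {D : Finset (Fin N → ℤ)}
    (hD : (D : Set (Fin N → ℤ)) ⊆ I) :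
    Measurable[fieldSigma Z I] fun ω => ∑ s ∈ D, Z s ω :=
  Finset.measurable_fun_sum D fun _ hs => measurable_fieldSigma (hD hs)

variable [mΩ : MeasurableSpace Ω] {P : Measure Ω}

theorem fieldSigma_le (hZ : ∀ s, Measurable (Z s)) (I : Set (Fin N → ℤ)) :
    fieldSigma Z I ≤ mΩ :=
  iSup₂_le fun s _ => (hZ s).comap_le

theorem alphaMix_nonneg (k : ℕ) : 0 ≤ alphaMix P Z k := by
  apply Real.sSup_nonneg
  rintro x ⟨I, J, -, A, B, -, -, rfl⟩
  exact abs_nonneg _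

theorem card_latDist_eq_le (D : Finset (Fin N → ℤ)) (s : Fin N → ℤ) {u : ℕ} (hu : 1 ≤ u) :
    (({t ∈ D | latDist s t = u} : Finset _).card : ℝ) ≤ 2 * N * 3 ^ (N - 1) * (u : ℝ) ^ (N - 1) := by
  classical
  let A : Fin N → Finset (Fin N → ℤ) := fun i => Fintype.piFinset fun j =>
    if j = i then {s j - u, s j + u} else Finset.Icc (s j - u) (s j + u)
  have hsub : {t ∈ D | latDist s t = u} ⊆ Finset.univ.biUnion A := by
    intro t ht
    have htu : (Finset.univ.sup fun i => (s i - t i).natAbs) = u := (Finset.mem_filter.mp ht).2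
    have hne : (Finset.univ : Finset (Fin N)).Nonempty := by
      by_contra hne
      rw [Finset.not_nonempty_iff_eq_empty] at hne
      rw [hne, Finset.sup_empty] at htu
      simp at htu
      omega
    obtain ⟨i, -, hi⟩ := Finset.exists_mem_eq_sup _ hne fun i => (s i - t i).natAbs
    refine Finset.mem_biUnion.mpr ⟨i, Finset.mem_univ i, Fintype.mem_piFinset.mpr fun j => ?_⟩
    have hj : (s j - t j).natAbs ≤ u :=
      htu ▸ Finset.le_sup (f := fun i => (s i - t i).natAbs) (Finset.mem_univ j)
    split_ifs with hji
    · subst hji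
      simp only [Finset.mem_insert, Finset.mem_singleton]
      omega
    · simp only [Finset.mem_Icc]
      omega
  have hcard : ∀ i, (A i).card ≤ 2 * (3 * u) ^ (N - 1) := by
    intro i
    rw [Fintype.card_piFinset, ← Finset.mul_prod_erase _ _ (Finset.mem_univ i)]
    refine Nat.mul_le_mul ?_ ?_
    · simpa using Finset.card_le_two
    · calc _ ≤ ∏ _j ∈ Finset.univ.erase i, 3 * u := by
            refine Finset.prod_le_prod' fun j hj => ?_
            rw [if_neg (Finset.ne_of_mem_erase hj), Int.card_Icc]
            omega
        _ = (3 * u) ^ (N - 1) := by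
            rw [Finset.prod_const, Finset.card_erase_of_mem (Finset.mem_univ i)]
            simp
  have h1 : ({t ∈ D | latDist s t = u} : Finset _).card ≤ N * (2 * (3 * u) ^ (N - 1)) :=
    calc _ ≤ (Finset.univ.biUnion A).card := Finset.card_le_card hsub
      _ ≤ ∑ i, (A i).card := Finset.card_biUnion_le
      _ ≤ ∑ _i : Fin N, 2 * (3 * u) ^ (N - 1) := Finset.sum_le_sum fun i _ => hcard i
      _ = N * (2 * (3 * u) ^ (N - 1)) := by simp
  calc (({t ∈ D | latDist s t = u} : Finset _).card : ℝ) ≤ ((N * (2 * (3 * u) ^ (N - 1)) : ℕ) : ℝ) :=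
        Nat.cast_le.mpr h1
    _ = 2 * N * 3 ^ (N - 1) * (u : ℝ) ^ (N - 1) := by
        push_cast
        ring

theorem latDist_eq_zero {s t : Fin N → ℤ} : latDist s t = 0 ↔ s = t := by
  rw [latDist, ← bot_eq_zero, Finset.sup_eq_bot_iff]
  constructor
  · intro h
    ext i
    have := h i (Finset.mem_univ i)
    simp at this
    omega
  · rintro rfl i -
    simp

theorem sum_alphaMix_erase_le (D : Finset (Fin N → ℤ)) (s : Fin N → ℤ) {p : ℕ}
    (hp : ∀ t ∈ D, latDist s t ≤ p) :
    ∑ t ∈ D.erase s, alphaMix P Z (latDist s t) ≤ 2 * N * 3 ^ (N - 1) * abar P Z p := by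
  have hmaps : ∀ t ∈ D.erase s, latDist s t ∈ Finset.Icc 1 p := by
    intro t ht
    have : latDist s t ≠ 0 := fun h => (Finset.ne_of_mem_erase ht) (latDist_eq_zero.mp h).symm
    exact Finset.mem_Icc.mpr ⟨by omega, hp t (Finset.mem_of_mem_erase ht)⟩
  rw [← Finset.sum_fiberwise_of_maps_to hmaps, abar, Finset.mul_sum]
  refine Finset.sum_le_sum fun u hu => ?_
  calc ∑ t ∈ D.erase s with latDist s t = u, alphaMix P Z (latDist s t)
      = ∑ t ∈ D.erase s with latDist s t = u, alphaMix P Z u :=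
        Finset.sum_congr rfl fun t ht => by rw [(Finset.mem_filter.mp ht).2]
    _ = ({t ∈ D.erase s | latDist s t = u} : Finset _).card * alphaMix P Z u := by simp
    _ ≤ (2 * N * 3 ^ (N - 1) * (u : ℝ) ^ (N - 1)) * alphaMix P Z u :=
        mul_le_mul_of_nonneg_right (card_latDist_eq_le _ s (Finset.mem_Icc.mp hu).1)
          (alphaMix_nonneg u)
    _ = _ := by ring

theorem abar_nonneg (k : ℕ) : 0 ≤ abar P Z k :=
  Finset.sum_nonneg fun _ _ => mul_nonneg (by positivity) (alphaMix_nonneg _)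

theorem abs_sum_le_card_mul {B : ℝ} (hZB : ∀ s, ∀ᵐ ω ∂P, |Z s ω| ≤ B)
    (D : Finset (Fin N → ℤ)) : ∀ᵐ ω ∂P, |∑ s ∈ D, Z s ω| ≤ D.card * B := by
  filter_upwards [ae_all_iff.mpr hZB] with ω h
  calc |∑ s ∈ D, Z s ω| ≤ ∑ s ∈ D, |Z s ω| := Finset.abs_sum_le_sum_abs _ _
    _ ≤ D.card * B := by
        rw [← nsmul_eq_mul]
        exact Finset.sum_le_card_nsmul _ _ _ fun s _ => h s

theorem abs_mul_sum_le_one {B δ : ℝ} (hZB : ∀ s, ∀ᵐ ω ∂P, |Z s ω| ≤ B)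
    {D : Finset (Fin N → ℤ)} (hδ : |δ| * (D.card * B) ≤ 1) :
    ∀ᵐ ω ∂P, |δ * ∑ s ∈ D, Z s ω| ≤ 1 := by
  filter_upwards [abs_sum_le_card_mul hZB D] with ω h
  rw [abs_mul]
  exact (mul_le_mul_of_nonneg_left h (abs_nonneg δ)).trans hδ

theorem exp_sum_blocks_le_exp_card {ι : Type*} {B δ : ℝ} (hZB : ∀ s, ∀ᵐ ω ∂P, |Z s ω| ≤ B)
    (T : Finset ι) (D : ι → Finset (Fin N → ℤ))
    (hδ : ∀ m ∈ T, |δ| * ((D m).card * B) ≤ 1) :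
    ∀ᵐ ω ∂P, Real.exp (∑ m ∈ T, δ * ∑ s ∈ D m, Z s ω) ≤ Real.exp T.card := by
  have hall : ∀ᵐ ω ∂P, ∀ m ∈ T, |δ * ∑ s ∈ D m, Z s ω| ≤ 1 :=
    (ae_ball_iff T.countable_toSet).mpr fun m hm => abs_mul_sum_le_one hZB (hδ m hm)
  filter_upwards [hall] with ω h
  refine Real.exp_le_exp.mpr ?_
  have := Finset.sum_le_card_nsmul T (fun m => δ * ∑ s ∈ D m, Z s ω) 1
    fun m hm => le_of_abs_le (h m hm)
  simpa using this

variable [IsProbabilityMeasure P]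

theorem abs_measureReal_inter_sub_le_one (A B : Set Ω) :
    |(P (A ∩ B)).toReal - (P A).toReal * (P B).toReal| ≤ 1 := by
  have h1 : P.real (A ∩ B) ≤ 1 := measureReal_le_one
  have h2 : P.real A ≤ 1 := measureReal_le_one
  have h3 : P.real B ≤ 1 := measureReal_le_one
  have h4 : 0 ≤ P.real A * P.real B := by positivity
  have h5 : P.real A * P.real B ≤ 1 := mul_le_one₀ h2 measureReal_nonneg h3
  have h6 : 0 ≤ P.real (A ∩ B) := measureReal_nonneg
  simp only [Measure.real] at *
  rw [abs_le]
  constructor <;> linarith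

theorem alphaMix_le_one (k : ℕ) : alphaMix P Z k ≤ 1 := by
  apply Real.sSup_le _ zero_le_one
  rintro x ⟨I, J, -, A, B, -, -, rfl⟩
  exact abs_measureReal_inter_sub_le_one A B

theorem measureReal_inter_le_add_alphaMix {k : ℕ} {I J : Set (Fin N → ℤ)}
    (h : ∀ s ∈ I, ∀ t ∈ J, k ≤ latDist s t) {A B : Set Ω}
    (hA : MeasurableSet[fieldSigma Z I] A) (hB : MeasurableSet[fieldSigma Z J] B) :
    P.real (A ∩ B) ≤ P.real A * P.real B + alphaMix P Z k := by
  have : |(P (A ∩ B)).toReal - (P A).toReal * (P B).toReal| ≤ alphaMix P Z k := by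
    refine le_csSup ⟨1, ?_⟩ ⟨I, J, h, A, B, hA, hB, rfl⟩
    rintro x ⟨I, J, -, A, B, -, -, rfl⟩
    exact abs_measureReal_inter_sub_le_one A B
  have h2 := le_of_abs_le this
  simp only [Measure.real]
  linarith

theorem integral_mul_le_alphaMix (hZ : ∀ s, Measurable (Z s)) {k : ℕ} {I J : Set (Fin N → ℤ)}
    (h : ∀ s ∈ I, ∀ t ∈ J, k ≤ latDist s t) {X Y : Ω → ℝ} {M₁ M₂ : ℝ}
    (hX : Measurable[fieldSigma Z I] X) (hY : Measurable[fieldSigma Z J] Y)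
    (hX0 : ∀ᵐ ω ∂P, 0 ≤ X ω) (hX1 : ∀ᵐ ω ∂P, X ω ≤ M₁)
    (hY0 : ∀ᵐ ω ∂P, 0 ≤ Y ω) (hY1 : ∀ᵐ ω ∂P, Y ω ≤ M₂) (hM₁ : 0 ≤ M₁) (hM₂ : 0 ≤ M₂) :
    ∫ ω, X ω * Y ω ∂P ≤ (∫ ω, X ω ∂P) * (∫ ω, Y ω ∂P) + alphaMix P Z k * M₁ * M₂ :=
  integral_mul_le_of_mixing (fieldSigma_le hZ I) (fieldSigma_le hZ J) hX hY hX0 hX1 hY0 hY1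
    hM₁ hM₂ fun _ _ hA hB => measureReal_inter_le_add_alphaMix h hA hB

theorem integral_mul_le_four_mul_alphaMix (hZ : ∀ s, Measurable (Z s)) {B : ℝ} (hB : 0 ≤ B)
    (hZB : ∀ s, ∀ᵐ ω ∂P, |Z s ω| ≤ B) (hZ0 : ∀ s, ∫ ω, Z s ω ∂P = 0) (s t : Fin N → ℤ) :
    ∫ ω, Z s ω * Z t ω ∂P ≤ 4 * B ^ 2 * alphaMix P Z (latDist s t) := by
  have hZi : ∀ s, Integrable (Z s) P := fun s =>
    Integrable.of_bound (hZ s).aestronglyMeasurable B (hZB s)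
  have hZZ : Integrable (fun ω => Z s ω * Z t ω) P :=
    (hZi t).bdd_mul (hZ s).aestronglyMeasurable (hZB s)
  have h0 : ∀ s, ∀ᵐ ω ∂P, 0 ≤ Z s ω + B := fun s => by
    filter_upwards [hZB s] with ω h
    linarith [neg_le_of_abs_le h]
  have h1 : ∀ s, ∀ᵐ ω ∂P, Z s ω + B ≤ 2 * B := fun s => by
    filter_upwards [hZB s] with ω h
    linarith [le_of_abs_le h]
  have hmeas : ∀ s : Fin N → ℤ, Measurable[fieldSigma Z {s}] fun ω => Z s ω + B := fun s =>
    (measurable_fieldSigma (Set.mem_singleton s)).add_const B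
  have key := integral_mul_le_alphaMix (P := P) hZ (k := latDist s t) (I := {s}) (J := {t})
    (by simp) (hmeas s) (hmeas t) (h0 s) (h1 s) (h0 t) (h1 t) (by positivity) (by positivity)
  have e1 : ∀ s, ∫ ω, (Z s ω + B) ∂P = B := fun s => by
    rw [integral_add (hZi s) (integrable_const _), hZ0]
    simp
  have e2 : ∫ ω, (Z s ω + B) * (Z t ω + B) ∂P = ∫ ω, Z s ω * Z t ω ∂P + B ^ 2 := by
    have : (fun ω => (Z s ω + B) * (Z t ω + B))
        = fun ω => (Z s ω * Z t ω) + (B * Z s ω + (B * Z t ω + B ^ 2)) := by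
      ext ω; ring
    have i1 : Integrable (fun ω => B * Z t ω + B ^ 2) P :=
      ((hZi t).const_mul B).add (integrable_const _)
    have i2 : Integrable (fun ω => B * Z s ω + (B * Z t ω + B ^ 2)) P :=
      ((hZi s).const_mul B).add i1
    rw [this, integral_add hZZ i2, integral_add ((hZi s).const_mul B) i1,
      integral_add ((hZi t).const_mul B) (integrable_const _), integral_const_mul,
      integral_const_mul, hZ0, hZ0]
    simp
  rw [e1, e1, e2] at key
  linarith

theorem integral_sq_sum_le (hZ : ∀ s, Measurable (Z s)) {B σ2 : ℝ} (hB : 0 ≤ B)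
    (hZB : ∀ s, ∀ᵐ ω ∂P, |Z s ω| ≤ B) (hZ0 : ∀ s, ∫ ω, Z s ω ∂P = 0)
    (hZ2 : ∀ s, ∫ ω, (Z s ω) ^ 2 ∂P ≤ σ2) (D : Finset (Fin N → ℤ)) {p : ℕ}
    (hp : ∀ s ∈ D, ∀ t ∈ D, latDist s t ≤ p) :
    ∫ ω, (∑ s ∈ D, Z s ω) ^ 2 ∂P
      ≤ D.card * (σ2 + 12 * B ^ 2 * (2 * N * 3 ^ (N - 1)) * abar P Z p) := by
  have hZZ : ∀ s t, Integrable (fun ω => Z s ω * Z t ω) P := fun s t =>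
    (Integrable.of_bound (hZ t).aestronglyMeasurable B (hZB t)).bdd_mul
      (hZ s).aestronglyMeasurable (hZB s)
  have h1 : ∫ ω, (∑ s ∈ D, Z s ω) ^ 2 ∂P = ∑ s ∈ D, ∑ t ∈ D, ∫ ω, Z s ω * Z t ω ∂P := by
    simp only [sq, Finset.sum_mul_sum]
    rw [integral_finsetSum _ fun s _ => integrable_finsetSum _ fun t _ => hZZ s t]
    exact Finset.sum_congr rfl fun s _ => integral_finsetSum _ fun t _ => hZZ s t
  rw [h1, ← nsmul_eq_mul]
  refine Finset.sum_le_card_nsmul _ _ _ fun s hs => ?_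
  rw [← Finset.add_sum_erase _ _ hs]
  refine add_le_add (by simpa only [sq] using hZ2 s) ?_
  have h2 := sum_alphaMix_erase_le (P := P) (Z := Z) D s (hp s hs)
  have h3 : 0 ≤ (2 * N * 3 ^ (N - 1)) * abar P Z p :=
    mul_nonneg (by positivity) (abar_nonneg _)
  calc ∑ t ∈ D.erase s, ∫ ω, Z s ω * Z t ω ∂P
      ≤ ∑ t ∈ D.erase s, 4 * B ^ 2 * alphaMix P Z (latDist s t) :=
        Finset.sum_le_sum fun t _ => integral_mul_le_four_mul_alphaMix hZ hB hZB hZ0 s t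
    _ = 4 * B ^ 2 * ∑ t ∈ D.erase s, alphaMix P Z (latDist s t) := by rw [Finset.mul_sum]
    _ ≤ 4 * B ^ 2 * ((2 * N * 3 ^ (N - 1)) * abar P Z p) :=
        mul_le_mul_of_nonneg_left h2 (by positivity)
    _ ≤ 12 * B ^ 2 * ((2 * N * 3 ^ (N - 1)) * abar P Z p) :=
        mul_le_mul_of_nonneg_right (by nlinarith [sq_nonneg B]) h3
    _ = _ := by ring

theorem integral_exp_le_of_abs_le_one {Y : Ω → ℝ} (hY : Measurable Y)
    (hY1 : ∀ᵐ ω ∂P, |Y ω| ≤ 1) (hY0 : ∫ ω, Y ω ∂P = 0) :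
    ∫ ω, Real.exp (Y ω) ∂P ≤ Real.exp (∫ ω, (Y ω) ^ 2 ∂P) := by
  have i1 : Integrable Y P := Integrable.of_bound hY.aestronglyMeasurable 1 hY1
  have i2 : Integrable (fun ω => (Y ω) ^ 2) P := by
    simp only [sq]
    exact i1.bdd_mul hY.aestronglyMeasurable hY1
  have i3 : Integrable (fun ω => 1 + Y ω) P := (integrable_const _).add i1
  calc ∫ ω, Real.exp (Y ω) ∂P ≤ ∫ ω, (1 + Y ω + (Y ω) ^ 2) ∂P := by
        refine integral_mono_of_nonneg (ae_of_all _ fun ω => (Real.exp_pos _).le) (i3.add i2) ?_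
        filter_upwards [hY1] with ω h
        have := Real.abs_exp_sub_one_sub_id_le h
        linarith [le_of_abs_le this]
    _ = 1 + ∫ ω, (Y ω) ^ 2 ∂P := by
        rw [integral_add i3 i2, integral_add (integrable_const _) i1, hY0]
        simp
    _ ≤ Real.exp (∫ ω, (Y ω) ^ 2 ∂P) := by
        rw [add_comm]
        exact Real.add_one_le_exp _

theorem integral_exp_sum_blocks_le {ι : Type*} (hZ : ∀ s, Measurable (Z s)) {B δ v : ℝ}
    {q : ℕ} (hv : 0 ≤ v) (hZB : ∀ s, ∀ᵐ ω ∂P, |Z s ω| ≤ B) (hZ0 : ∀ s, ∫ ω, Z s ω ∂P = 0)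
    (T : Finset ι) (D : ι → Finset (Fin N → ℤ))
    (hsep : ∀ m ∈ T, ∀ m' ∈ T, m ≠ m' → ∀ s ∈ D m, ∀ t ∈ D m', q ≤ latDist s t)
    (hδ : ∀ m ∈ T, |δ| * ((D m).card * B) ≤ 1)
    (hvar : ∀ m ∈ T, ∫ ω, (∑ s ∈ D m, Z s ω) ^ 2 ∂P ≤ (D m).card * v) :
    ∫ ω, Real.exp (∑ m ∈ T, δ * ∑ s ∈ D m, Z s ω) ∂P
      ≤ Real.exp (δ ^ 2 * v * ∑ m ∈ T, ((D m).card : ℝ))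
        * (1 + T.card * alphaMix P Z q * Real.exp T.card) := by
  classical
  induction T using Finset.induction_on with
  | empty => simp
  | insert a T ha ih =>
    specialize ih (fun m hm m' hm' => hsep m (Finset.mem_insert_of_mem hm) m'
        (Finset.mem_insert_of_mem hm')) (fun m hm => hδ m (Finset.mem_insert_of_mem hm))
      (fun m hm => hvar m (Finset.mem_insert_of_mem hm))
    have hbd := abs_mul_sum_le_one hZB (hδ a (Finset.mem_insert_self a T))
    have hX1 : ∀ᵐ ω ∂P, Real.exp (δ * ∑ s ∈ D a, Z s ω) ≤ Real.exp 1 := by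
      filter_upwards [hbd] with ω h
      exact Real.exp_le_exp.mpr (le_of_abs_le h)
    have hY1 := exp_sum_blocks_le_exp_card hZB T D fun m hm => hδ m (Finset.mem_insert_of_mem hm)
    have hXm : Measurable[fieldSigma Z (D a)] fun ω => Real.exp (δ * ∑ s ∈ D a, Z s ω) :=
      ((measurable_sum_fieldSigma le_rfl).const_mul δ).exp
    have hYm : Measurable[fieldSigma Z (⋃ m ∈ T, (D m : Set (Fin N → ℤ)))]
        fun ω => Real.exp (∑ m ∈ T, δ * ∑ s ∈ D m, Z s ω) := by
      refine Measurable.exp (Finset.measurable_fun_sum T fun m hm => ?_)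
      exact (measurable_sum_fieldSigma (Set.subset_biUnion_of_mem (u := fun m =>
        (D m : Set (Fin N → ℤ))) hm)).const_mul δ
    have hdist : ∀ s ∈ (D a : Set (Fin N → ℤ)), ∀ t ∈ ⋃ m ∈ T, (D m : Set (Fin N → ℤ)),
        q ≤ latDist s t := by
      intro s hs t ht
      obtain ⟨m, hm, htm⟩ := Set.mem_iUnion₂.mp ht
      exact hsep a (Finset.mem_insert_self a T) m (Finset.mem_insert_of_mem hm)
        (fun h => ha (h ▸ hm)) s hs t htm
    have key := integral_mul_le_alphaMix (P := P) hZ hdist hXm hYm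
      (ae_of_all _ fun _ => (Real.exp_pos _).le) hX1
      (ae_of_all _ fun _ => (Real.exp_pos _).le) hY1 (Real.exp_pos _).le (Real.exp_pos _).le
    have hXE : ∫ ω, Real.exp (δ * ∑ s ∈ D a, Z s ω) ∂P
        ≤ Real.exp (δ ^ 2 * v * (D a).card) := by
      refine (integral_exp_le_of_abs_le_one
        ((Finset.measurable_fun_sum _ fun s _ => hZ s).const_mul δ)
        hbd ?_).trans (Real.exp_le_exp.mpr ?_)
      · rw [integral_const_mul, integral_finsetSum _ fun s _ =>
          Integrable.of_bound (hZ s).aestronglyMeasurable B (hZB s)]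
        simp [hZ0]
      · simp only [mul_pow]
        rw [integral_const_mul, mul_assoc, mul_comm v]
        exact mul_le_mul_of_nonneg_left (hvar a (Finset.mem_insert_self a T)) (sq_nonneg δ)
    have hα := alphaMix_nonneg (P := P) (Z := Z) q
    simp only [Finset.sum_insert ha, Real.exp_add, Finset.card_insert_of_notMem ha, mul_add]
    refine key.trans ?_
    set E := Real.exp (δ ^ 2 * v * (D a).card)
    set G := Real.exp (δ ^ 2 * v * ∑ m ∈ T, ((D m).card : ℝ))
    have hE : 1 ≤ E := Real.one_le_exp (by positivity)
    have hG : 1 ≤ G := Real.one_le_exp (by positivity)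
    have he : 1 ≤ Real.exp 1 := Real.one_le_exp zero_le_one
    set e := Real.exp 1
    have hc : Real.exp ((T.card + 1 : ℕ) : ℝ) = e * Real.exp T.card := by
      rw [← Real.exp_add]; push_cast; ring_nf
    rw [hc]
    have hx := Real.exp_pos (T.card : ℝ)
    set x := Real.exp (T.card : ℝ)
    set α := alphaMix P Z q
    have hEG : 1 ≤ E * G := one_le_mul_of_one_le_of_one_le hE hG
    calc _ ≤ E * (G * (1 + T.card * α * x)) + α * e * x := by
          gcongr
      _ ≤ E * G * (1 + T.card * α * (e * x)) + E * G * (α * (e * x)) := by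
          have h1 : x ≤ e * x := le_mul_of_one_le_left hx.le he
          have h2 : α * e * x ≤ E * G * (α * (e * x)) := by
            rw [mul_assoc]
            exact le_mul_of_one_le_left (by positivity) hEG
          rw [← mul_assoc E]
          gcongr E * G * (1 + T.card * α * ?_) + ?_
      _ = _ := by push_cast; ring

theorem integral_exp_sum_blocks_le_exp_card {ι : Type*} {B δ : ℝ}
    (hZB : ∀ s, ∀ᵐ ω ∂P, |Z s ω| ≤ B) (T : Finset ι) (D : ι → Finset (Fin N → ℤ))
    (hδ : ∀ m ∈ T, |δ| * ((D m).card * B) ≤ 1) :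
    ∫ ω, Real.exp (∑ m ∈ T, δ * ∑ s ∈ D m, Z s ω) ∂P ≤ Real.exp T.card := by
  have : ∫ _ω, Real.exp T.card ∂P = Real.exp T.card := by simp
  rw [← this]
  exact integral_mono_of_nonneg (ae_of_all _ fun _ => (Real.exp_pos _).le)
    (integrable_const _) (exp_sum_blocks_le_exp_card hZB T D hδ)

end AlphaMix

/-- The mixing correction is at most exponential in `α ^ θ` for `θ` of order `1 / R`. -/
theorem min_mixing_factor_le_exp {R : ℕ} {α θ L : ℝ} (hα0 : 0 ≤ α) (hα1 : α ≤ 1)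
    (hθR : θ * (R + 1) ≤ 1) (hRL : R ≤ L) :
    min (1 + R * α * Real.exp R) (Real.exp R)
      ≤ Real.exp (12 * Real.sqrt (Real.exp 1) * L * α ^ θ) := by
  set x := α ^ θ with hx
  have hx0 : 0 ≤ x := Real.rpow_nonneg hα0 θ
  have hs : 1 ≤ Real.sqrt (Real.exp 1) :=
    Real.one_le_sqrt.mpr (Real.one_le_exp zero_le_one)
  have hmono : 12 * (R * x) ≤ 12 * Real.sqrt (Real.exp 1) * L * x := by
    have : (R : ℝ) * x ≤ L * x := mul_le_mul_of_nonneg_right hRL hx0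
    have h0 : 0 ≤ (R : ℝ) * x := by positivity
    nlinarith
  rcases le_total (x * Real.exp 1) 1 with h | h
  · refine (min_le_left _ _).trans ?_
    have hαx : α ≤ x ^ (R + 1) := by
      rw [hx, ← Real.rpow_mul_natCast hα0]
      rcases hα0.eq_or_lt with h0 | h0
      · rw [← h0]
        exact Real.rpow_nonneg le_rfl _
      · conv_lhs => rw [← Real.rpow_one α]
        exact Real.rpow_le_rpow_of_exponent_ge h0 hα1 (by push_cast; exact hθR)
    have h1 : α * Real.exp R ≤ x := by
      calc α * Real.exp R ≤ x ^ (R + 1) * Real.exp R := by gcongr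
        _ = (x * Real.exp 1) ^ R * x := by
            rw [mul_pow, ← Real.exp_nat_mul, mul_one]
            ring
        _ ≤ x := mul_le_of_le_one_left hx0 (pow_le_one₀ (by positivity) h)
    have h2 : R * α * Real.exp R ≤ R * x := by
      rw [mul_assoc]
      exact mul_le_mul_of_nonneg_left h1 (Nat.cast_nonneg R)
    have h3 : 0 ≤ (R : ℝ) * x := by positivity
    have h4 := Real.add_one_le_exp (12 * Real.sqrt (Real.exp 1) * L * x)
    linarith
  · refine (min_le_right _ _).trans (Real.exp_le_exp.mpr ?_)
    have h1 : 1 ≤ 12 * x := by nlinarith [Real.exp_one_lt_d9]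
    have h2 : (R : ℝ) ≤ R * (12 * x) := le_mul_of_one_le_right (Nat.cast_nonneg R) h1
    linarith

section Blocks

variable {N : ℕ} (p q : Fin N → ℕ)

/-- Records, coordinate by coordinate, whether `s` lies in a long (`p`) or a short (`q`) segment
of the tiling of `ℤ^N` with period `p + q`. -/
def blockClass (s : Fin N → ℤ) : Fin N → Bool := fun i =>
  decide ((s i - 1) % ((p i : ℤ) + q i) < p i)

/-- The index of the cell of the tiling of `ℤ^N` with period `p + q` that contains `s`. -/
def blockIdx (s : Fin N → ℤ) : Fin N → ℤ := fun i => (s i - 1) / ((p i : ℤ) + q i)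

/-- The part of the observation window in the block of class `k` and index `m`. -/
def block (n : Fin N → ℕ) (k : Fin N → Bool) (m : Fin N → ℤ) : Finset (Fin N → ℤ) :=
  {s ∈ obsIdx n | blockClass p q s = k ∧ blockIdx p q s = m}

/-- The indices of the cells meeting the observation window. -/
def cells (n : Fin N → ℕ) : Finset (Fin N → ℤ) :=
  Fintype.piFinset fun i => Finset.Icc 0 (((n i : ℤ) - 1) / ((p i : ℤ) + q i))

variable {p q} {n : Fin N → ℕ}

theorem blockIdx_mem_cells {s : Fin N → ℤ} (hs : s ∈ obsIdx n) : blockIdx p q s ∈ cells p q n := by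
  obtain ⟨h1, h2⟩ := Finset.mem_Icc.mp hs
  refine Fintype.mem_piFinset.mpr fun i => Finset.mem_Icc.mpr ⟨?_, ?_⟩
  · exact Int.ediv_nonneg (by have := h1 i; simp at this; omega) (by positivity)
  · rcases (by positivity : 0 ≤ (p i : ℤ) + q i).eq_or_lt with h0 | h0
    · rw [blockIdx, ← h0]
      simp
    · exact Int.ediv_le_ediv h0 (by have := h2 i; simp at this; omega)

theorem card_obsIdx : (obsIdx n).card = ∏ i, n i := by
  rw [obsIdx, Pi.card_Icc]
  simp

theorem sum_blocks {M : Type*} [AddCommMonoid M] (f : (Fin N → ℤ) → M) :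
    ∑ k, ∑ m ∈ cells p q n, ∑ s ∈ block p q n k m, f s = ∑ s ∈ obsIdx n, f s := by
  rw [← Finset.sum_fiberwise_of_maps_to (g := blockClass p q) (t := Finset.univ)
    (fun s _ => Finset.mem_univ _)]
  refine Finset.sum_congr rfl fun k _ => ?_
  rw [← Finset.sum_fiberwise_of_maps_to (g := blockIdx p q) (t := cells p q n)
    (fun s hs => blockIdx_mem_cells (Finset.mem_filter.mp hs).1)]
  simp only [block, Finset.filter_filter]

theorem sum_card_block_le (k : Fin N → Bool) :
    ∑ m ∈ cells p q n, (block p q n k m).card ≤ ∏ i, n i := by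
  have h := sum_blocks (p := p) (q := q) (n := n) fun _ => 1
  simp only [← Finset.card_eq_sum_ones, card_obsIdx] at h
  rw [← h]
  exact Finset.single_le_sum (f := fun k => ∑ m ∈ cells p q n, (block p q n k m).card)
    (fun _ _ => Nat.zero_le _) (Finset.mem_univ k)

/-- Coordinates of a block lie in a segment of length `p i`. -/
theorem mem_block_bounds (hq : ∀ i, 1 ≤ q i) {k : Fin N → Bool}
    {m s : Fin N → ℤ} (hs : s ∈ block p q n k m) (i : Fin N) :
    1 + ((p i : ℤ) + q i) * m i + (if k i then 0 else (p i : ℤ)) ≤ s i ∧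
      s i < 1 + ((p i : ℤ) + q i) * m i + (if k i then (p i : ℤ) else (p i : ℤ) + q i) := by
  obtain ⟨-, rfl, rfl⟩ := Finset.mem_filter.mp hs
  have hpos : 0 < (p i : ℤ) + q i := by have := hq i; omega
  have h1 := Int.emod_add_mul_ediv (s i - 1) ((p i : ℤ) + q i)
  have h2 := Int.emod_nonneg (s i - 1) hpos.ne'
  have h3 := Int.emod_lt_of_pos (s i - 1) hpos
  simp only [blockIdx, blockClass, decide_eq_true_eq]
  split_ifs <;> constructor <;> linarith

theorem card_block_le (hq : ∀ i, 1 ≤ q i) (hqp : ∀ i, q i ≤ p i) (k : Fin N → Bool)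
    (m : Fin N → ℤ) : (block p q n k m).card ≤ ∏ i, p i := by
  have hsub : block p q n k m ⊆ Fintype.piFinset fun i =>
      Finset.Ico (1 + ((p i : ℤ) + q i) * m i + (if k i then 0 else (p i : ℤ)))
        (1 + ((p i : ℤ) + q i) * m i + (if k i then (p i : ℤ) else (p i : ℤ) + q i)) :=
    fun s hs => Fintype.mem_piFinset.mpr fun i =>
      Finset.mem_Ico.mpr (mem_block_bounds hq hs i)
  refine (Finset.card_le_card hsub).trans ?_
  rw [Fintype.card_piFinset]
  refine Finset.prod_le_prod' fun i _ => ?_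
  have := hqp i
  rw [Int.card_Ico]
  split_ifs <;> omega

theorem latDist_le_of_mem_block (hq : ∀ i, 1 ≤ q i) (hqp : ∀ i, q i ≤ p i) {b : ℕ}
    (hb : ∀ i, p i ≤ b) {k : Fin N → Bool} {m s t : Fin N → ℤ}
    (hs : s ∈ block p q n k m) (ht : t ∈ block p q n k m) : latDist s t ≤ b := by
  refine Finset.sup_le fun i _ => ?_
  have h1 := mem_block_bounds hq hs i
  have h2 := mem_block_bounds hq ht i
  have h3 := hqp i
  have h4 := hb i
  generalize ((p i : ℤ) + q i) * m i = x at h1 h2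
  split_ifs at h1 h2 <;> omega

theorem le_latDist_of_mem_block (hq : ∀ i, 1 ≤ q i) (hqp : ∀ i, q i ≤ p i) {b : ℕ}
    (hb : ∀ i, b ≤ q i) {k : Fin N → Bool} {m m' s t : Fin N → ℤ} (hm : m ≠ m')
    (hs : s ∈ block p q n k m) (ht : t ∈ block p q n k m') : b ≤ latDist s t := by
  obtain ⟨i, hi⟩ := Function.ne_iff.mp hm
  have h1 := mem_block_bounds hq hs i
  have h2 := mem_block_bounds hq ht i
  have h3 := hqp i
  have h4 := hb i
  refine le_trans ?_ (Finset.le_sup (f := fun i => (s i - t i).natAbs) (Finset.mem_univ i))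
  have hpos : 0 ≤ (p i : ℤ) + q i := by positivity
  rcases lt_or_gt_of_ne hi with h | h
  · have h5 := mul_le_mul_of_nonneg_left (Int.add_one_le_of_lt h) hpos
    rw [mul_add, mul_one] at h5
    generalize ((p i : ℤ) + q i) * m i = x at h1 h2 h5
    generalize ((p i : ℤ) + q i) * m' i = y at h1 h2 h5
    split_ifs at h1 h2 <;> omega
  · have h5 := mul_le_mul_of_nonneg_left (Int.add_one_le_of_lt h) hpos
    rw [mul_add, mul_one] at h5
    generalize ((p i : ℤ) + q i) * m i = x at h1 h2 h5
    generalize ((p i : ℤ) + q i) * m' i = y at h1 h2 h5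
    split_ifs at h1 h2 <;> omega

theorem card_cells_mul_le (hn : ∀ i, q i + p i < n i) :
    (cells p q n).card * ∏ i, p i ≤ 2 ^ N * ∏ i, n i := by
  have h2 : (2 : ℕ) ^ N = ∏ _i : Fin N, 2 := by simp
  rw [cells, Fintype.card_piFinset, h2, ← Finset.prod_mul_distrib, ← Finset.prod_mul_distrib]
  refine Finset.prod_le_prod' fun i _ => ?_
  have h := hn i
  rw [Int.card_Icc]
  have e : ((n i : ℤ) - 1) / ((p i : ℤ) + q i) = (((n i - 1) / (p i + q i) : ℕ) : ℤ) := by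
    push_cast [Nat.cast_sub (show 1 ≤ n i by omega)]
    rfl
  rw [e]
  have h3 : (((((n i - 1) / (p i + q i) : ℕ) : ℤ) + 1 - 0).toNat)
      = (n i - 1) / (p i + q i) + 1 := by
    generalize (n i - 1) / (p i + q i) = x
    omega
  rw [h3]
  have h4 := Nat.div_mul_le_self (n i - 1) (p i + q i)
  calc ((n i - 1) / (p i + q i) + 1) * p i
      ≤ ((n i - 1) / (p i + q i) + 1) * (p i + q i) := Nat.mul_le_mul_left _ (by omega)
    _ = (n i - 1) / (p i + q i) * (p i + q i) + (p i + q i) := by ring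
    _ ≤ 2 * n i := by omega

end Blocks

theorem integral_exp_sum_le {N : ℕ} {Ω : Type*} [MeasurableSpace Ω] {P : Measure Ω}
    [IsProbabilityMeasure P] {Z : (Fin N → ℤ) → Ω → ℝ} (hZ : ∀ s, Measurable (Z s)) {B σ2 β : ℝ}
    (hB : 0 ≤ B) (hZB : ∀ s, ∀ᵐ ω ∂P, |Z s ω| ≤ B) (hZ0 : ∀ s, ∫ ω, Z s ω ∂P = 0)
    (hZ2 : ∀ s, ∫ ω, (Z s ω) ^ 2 ∂P ≤ σ2) {n p q : Fin N → ℕ} (hq : ∀ i, 1 ≤ q i)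
    (hqp : ∀ i, q i ≤ p i) (hn : ∀ i, q i + p i < n i) {a b : ℕ} (ha : ∀ i, a ≤ q i)
    (hb : ∀ i, p i ≤ b)
    (hβ : 2 ^ (N + 1) * B * (∏ i, (p i : ℝ)) * Real.exp 1 * |β| < 1) :
    ∫ ω, Real.exp (β * ∑ s ∈ obsIdx n, Z s ω) ∂P
      ≤ Real.exp (12 * Real.sqrt (Real.exp 1) * 2 ^ N * ((∏ i, (n i : ℝ)) / ∏ i, (p i : ℝ)) *
          alphaMix P Z a ^ ((∏ i, (p i : ℝ)) / ((∏ i, (n i : ℝ)) * (2 ^ N + 1)))) *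
        Real.exp (2 ^ (3 * N) * β ^ 2 * Real.exp 1 *
          (σ2 + 12 * B ^ 2 * (2 * N * 3 ^ (N - 1)) * abar P Z b) * ∏ i, (n i : ℝ)) := by
  set v := σ2 + 12 * B ^ 2 * (2 * N * 3 ^ (N - 1)) * abar P Z b with hv_def
  have hσ : 0 ≤ σ2 := (integral_nonneg fun ω => sq_nonneg (Z 0 ω)).trans (hZ2 0)
  have hv : 0 ≤ v := add_nonneg hσ (mul_nonneg (by positivity) (abar_nonneg _))
  have hp0 : 0 < ∏ i, (p i : ℝ) :=
    Finset.prod_pos fun i _ => Nat.cast_pos.mpr ((hq i).trans (hqp i))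
  have hpn : ∏ i, (p i : ℝ) ≤ ∏ i, (n i : ℝ) :=
    Finset.prod_le_prod (fun i _ => Nat.cast_nonneg _) fun i _ =>
      Nat.cast_le.mpr (by have := hn i; omega)
  have hcells : ((cells p q n).card : ℝ) * ∏ i, (p i : ℝ) ≤ 2 ^ N * ∏ i, (n i : ℝ) := by
    exact_mod_cast card_cells_mul_le hn
  have hcard : ∀ k m, ((block p q n k m).card : ℝ) ≤ ∏ i, (p i : ℝ) := fun k m => by
    exact_mod_cast card_block_le hq hqp k m
  have hsum : ∀ k, ∑ m ∈ cells p q n, ((block p q n k m).card : ℝ) ≤ ∏ i, (n i : ℝ) :=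
    fun k => by exact_mod_cast sum_card_block_le k
  set p' := ∏ i, (p i : ℝ)
  set n' := ∏ i, (n i : ℝ)
  have hn0 : 0 < n' := hp0.trans_le hpn
  set F := Real.exp (12 * Real.sqrt (Real.exp 1) * 2 ^ N * (n' / p') *
    alphaMix P Z a ^ (p' / (n' * (2 ^ N + 1))))
  set δ : ℝ := 2 ^ N * β with hδ_def
  have he : 1 ≤ Real.exp 1 := Real.one_le_exp zero_le_one
  have hδ : ∀ k, ∀ m ∈ cells p q n, |δ| * ((block p q n k m).card * B) ≤ 1 := by
    intro k m _
    have h1 : |δ| = 2 ^ N * |β| := by rw [hδ_def, abs_mul, abs_of_pos (by positivity)]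
    calc |δ| * ((block p q n k m).card * B) ≤ |δ| * (p' * B) := by
          gcongr
          exact hcard k m
      _ ≤ (|δ| * (p' * B)) * (2 * Real.exp 1) :=
          le_mul_of_one_le_right (by positivity) (by linarith)
      _ = 2 ^ (N + 1) * B * p' * Real.exp 1 * |β| := by rw [h1]; ring
      _ ≤ 1 := hβ.le
  have hclass : ∀ k : Fin N → Bool,
      ∫ ω, Real.exp (∑ m ∈ cells p q n, δ * ∑ s ∈ block p q n k m, Z s ω) ∂P
        ≤ F * Real.exp (2 ^ (3 * N) * β ^ 2 * Real.exp 1 * v * n') := by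
    intro k
    have hmin := min_mixing_factor_le_exp (R := (cells p q n).card)
      (alphaMix_nonneg (P := P) (Z := Z) a) (alphaMix_le_one a)
      (θ := p' / (n' * (2 ^ N + 1))) (L := 2 ^ N * (n' / p'))
      (by
        rw [div_mul_eq_mul_div, div_le_one (by positivity)]
        linarith)
      (by
        rw [← mul_div_assoc, le_div_iff₀ hp0]
        exact hcells)
    rw [← mul_assoc _ ((2 : ℝ) ^ N)] at hmin
    have hexp : Real.exp (δ ^ 2 * v * ∑ m ∈ cells p q n, ((block p q n k m).card : ℝ))
        ≤ Real.exp (2 ^ (3 * N) * β ^ 2 * Real.exp 1 * v * n') := by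
      refine Real.exp_le_exp.mpr ?_
      calc δ ^ 2 * v * ∑ m ∈ cells p q n, ((block p q n k m).card : ℝ)
          ≤ δ ^ 2 * v * n' := mul_le_mul_of_nonneg_left (hsum k) (by positivity)
        _ ≤ (δ ^ 2 * v * n') * (2 ^ N * Real.exp 1) :=
            le_mul_of_one_le_right (by positivity)
              (one_le_mul_of_one_le_of_one_le (one_le_pow₀ one_le_two) he)
        _ = 2 ^ (3 * N) * β ^ 2 * Real.exp 1 * v * n' := by rw [hδ_def]; ring
    rcases min_le_iff.mp hmin with h | h
    · refine (integral_exp_sum_blocks_le hZ (q := a) hv hZB hZ0 _ _ ?_ (hδ k) ?_).trans ?_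
      · exact fun m _ m' _ hmm s hs t ht => le_latDist_of_mem_block hq hqp ha hmm hs ht
      · exact fun m _ => integral_sq_sum_le hZ hB hZB hZ0 hZ2 _ fun s hs t ht =>
          latDist_le_of_mem_block hq hqp hb hs ht
      · rw [mul_comm F]
        exact mul_le_mul hexp h (add_nonneg zero_le_one (mul_nonneg (mul_nonneg
          (Nat.cast_nonneg _) (alphaMix_nonneg a)) (Real.exp_pos _).le)) (Real.exp_pos _).le
    · refine (integral_exp_sum_blocks_le_exp_card hZB _ _ (hδ k)).trans (h.trans ?_)
      exact le_mul_of_one_le_right (Real.exp_pos _).le (Real.one_le_exp (by positivity))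
  have hint : ∀ k : Fin N → Bool, Integrable
      (fun ω => Real.exp (∑ m ∈ cells p q n, δ * ∑ s ∈ block p q n k m, Z s ω)) P := by
    intro k
    refine Integrable.of_bound (C := Real.exp (cells p q n).card)
      (Measurable.aestronglyMeasurable ?_) ?_
    · exact (Finset.measurable_fun_sum _ fun m _ =>
        (Finset.measurable_fun_sum _ fun s _ => hZ s).const_mul δ).exp
    · filter_upwards [exp_sum_blocks_le_exp_card hZB (cells p q n) (block p q n k) (hδ k)] with ω h
      rwa [Real.norm_of_nonneg (Real.exp_pos _).le]
  have hw : ∑ _k : Fin N → Bool, (1 / 2 ^ N : ℝ) = 1 := by simp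
  have hconv : ∀ ω, Real.exp (β * ∑ s ∈ obsIdx n, Z s ω) ≤ ∑ k : Fin N → Bool,
      (1 / 2 ^ N : ℝ) * Real.exp (∑ m ∈ cells p q n, δ * ∑ s ∈ block p q n k m, Z s ω) := by
    intro ω
    have h := convexOn_exp.map_sum_le (t := Finset.univ) (w := fun _ : Fin N → Bool =>
      (1 / 2 ^ N : ℝ)) (p := fun k => ∑ m ∈ cells p q n, δ * ∑ s ∈ block p q n k m, Z s ω)
      (fun _ _ => by positivity) hw (fun _ _ => Set.mem_univ _)
    simp only [smul_eq_mul] at h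
    refine le_of_eq_of_le ?_ h
    congr 1
    rw [← sum_blocks (p := p) (q := q), Finset.mul_sum]
    refine Finset.sum_congr rfl fun k _ => ?_
    rw [← Finset.mul_sum, hδ_def]
    field_simp
  calc ∫ ω, Real.exp (β * ∑ s ∈ obsIdx n, Z s ω) ∂P
      ≤ ∫ ω, ∑ k : Fin N → Bool, (1 / 2 ^ N : ℝ) *
          Real.exp (∑ m ∈ cells p q n, δ * ∑ s ∈ block p q n k m, Z s ω) ∂P :=
        integral_mono_of_nonneg (ae_of_all _ fun ω => (Real.exp_pos _).le)
          (integrable_finsetSum _ fun k _ => (hint k).const_mul _) (ae_of_all _ hconv)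
    _ = ∑ k : Fin N → Bool, (1 / 2 ^ N : ℝ) *
          ∫ ω, Real.exp (∑ m ∈ cells p q n, δ * ∑ s ∈ block p q n k m, Z s ω) ∂P := by
        rw [integral_finsetSum _ fun k _ => (hint k).const_mul _]
        simp only [integral_const_mul]
    _ ≤ ∑ _k : Fin N → Bool, (1 / 2 ^ N : ℝ) *
          (F * Real.exp (2 ^ (3 * N) * β ^ 2 * Real.exp 1 * v * n')) :=
        Finset.sum_le_sum fun k _ => mul_le_mul_of_nonneg_left (hclass k) (by positivity)
    _ = F * Real.exp (2 ^ (3 * N) * β ^ 2 * Real.exp 1 * v * n') := by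
        rw [← Finset.sum_mul, hw, one_mul]


/-- Bernstein inequality for spatial lattice processes. -/
theorem bernstein_spatial_lattice (N : ℕ) (hN : 0 < N) :
    ∃ γc : ℝ, ∀ (Ω : Type) (_ : MeasurableSpace Ω) (P : Measure Ω),
      IsProbabilityMeasure P →
      ∀ (Z : (Fin N → ℤ) → Ω → ℝ), (∀ s, Measurable (Z s)) →
      -- strong mixing
      Tendsto (alphaMix P Z) atTop (nhds 0) →
      ∀ (B σ2 : ℝ),
      (∀ s, ∀ᵐ ω ∂P, |Z s ω| ≤ B) →
      (∀ s, ∫ ω, Z s ω ∂P = 0) →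
      (∀ s, ∫ ω, (Z s ω) ^ 2 ∂P ≤ σ2) →
      ∀ (n : Fin N → ℕ) (Pseq Qseq : Fin N → ℕ → ℕ),
      (∀ i, Monotone (Pseq i)) → (∀ i, Monotone (Qseq i)) →
      (∀ i, 1 ≤ Qseq i (n i) ∧ Qseq i (n i) ≤ Pseq i (n i) ∧
        Pseq i (n i) < Qseq i (n i) + Pseq i (n i) ∧ Qseq i (n i) + Pseq i (n i) < n i) →
      ∀ ε β : ℝ, 0 < ε → 0 < β →
      2 ^ (N + 1) * B * (∏ i, (Pseq i (n i) : ℝ)) * Real.exp 1 * β < 1 →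
      P {ω | ε < |∑ s ∈ obsIdx n, Z s ω|} ≤ ENNReal.ofReal
        (2 * Real.exp (12 * Real.sqrt (Real.exp 1) * 2 ^ N *
            ((∏ i, (n i : ℝ)) / ∏ i, (Pseq i (n i) : ℝ)) *
            (alphaMix P Z (Finset.univ.inf' (Finset.univ_nonempty_iff.mpr ⟨⟨0, hN⟩⟩)
                fun i => Qseq i (n i))) ^
              ((∏ i, (Pseq i (n i) : ℝ)) / ((∏ i, (n i : ℝ)) * (2 ^ N + 1)))) *
          Real.exp (-β * ε + 2 ^ (3 * N) * β ^ 2 * Real.exp 1 *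
            (σ2 + 12 * B ^ 2 * γc *
              abar P Z (Finset.univ.sup' (Finset.univ_nonempty_iff.mpr ⟨⟨0, hN⟩⟩)
                fun i => Pseq i (n i))) *
            ∏ i, (n i : ℝ))) := by
  refine ⟨2 * N * 3 ^ (N - 1), ?_⟩
  intro Ω _ P _ Z hZ _ B σ2 hZB hZ0 hZ2 n Pseq Qseq _ _ hPQ ε β hε hβ hβB
  have hB : 0 ≤ B := by
    obtain ⟨ω, hω⟩ := (hZB 0).exists
    exact (abs_nonneg _).trans hω
  have hmgf := fun (b : ℝ) (hb : |b| = β) => integral_exp_sum_le (P := P) (β := b) hZ hB hZB hZ0 hZ2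
    (n := n)
    (a := Finset.univ.inf' (Finset.univ_nonempty_iff.mpr ⟨⟨0, hN⟩⟩) fun i => Qseq i (n i))
    (b := Finset.univ.sup' (Finset.univ_nonempty_iff.mpr ⟨⟨0, hN⟩⟩) fun i => Pseq i (n i))
    (p := fun i => Pseq i (n i)) (q := fun i => Qseq i (n i))
    (fun i => (hPQ i).1) (fun i => (hPQ i).2.1) (fun i => (hPQ i).2.2.2)
    (fun i => Finset.inf'_le (fun i => Qseq i (n i)) (Finset.mem_univ i))
    (fun i => Finset.le_sup' (fun i => Pseq i (n i)) (Finset.mem_univ i))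
    (by rw [hb]; exact hβB)
  have h1 := hmgf β (abs_of_pos hβ)
  have h2 := hmgf (-β) (by rw [abs_neg, abs_of_pos hβ])
  rw [neg_sq] at h2
  have hint : ∀ b : ℝ, Integrable (fun ω => Real.exp (b * ∑ s ∈ obsIdx n, Z s ω)) P := by
    intro b
    refine Integrable.of_bound (C := Real.exp (|b| * ((obsIdx n).card * B)))
      (((Finset.measurable_fun_sum _ fun s _ => hZ s).const_mul b).exp).aestronglyMeasurable ?_
    filter_upwards [abs_sum_le_card_mul hZB (obsIdx n)] with ω h
    rw [Real.norm_of_nonneg (Real.exp_pos _).le]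
    refine Real.exp_le_exp.mpr ((le_abs_self _).trans ?_)
    rw [abs_mul]
    exact mul_le_mul_of_nonneg_left h (abs_nonneg b)
  set S : Ω → ℝ := fun ω => ∑ s ∈ obsIdx n, Z s ω
  have hmarkov := mul_meas_ge_le_integral_of_nonneg (μ := P)
    (f := fun ω => Real.exp (β * S ω) + Real.exp (-β * S ω))
    (ae_of_all _ fun ω => (add_pos (Real.exp_pos _) (Real.exp_pos _)).le)
    ((hint β).add (hint (-β))) (Real.exp (β * ε))
  rw [integral_add (hint β) (hint (-β))] at hmarkov
  have hsub : {ω | ε < |S ω|}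
      ⊆ {ω | Real.exp (β * ε) ≤ Real.exp (β * S ω) + Real.exp (-β * S ω)} := by
    intro ω (hω : ε < |S ω|)
    show Real.exp (β * ε) ≤ Real.exp (β * S ω) + Real.exp (-β * S ω)
    have e1 := Real.exp_pos (β * S ω)
    have e2 := Real.exp_pos (-β * S ω)
    rcases lt_abs.mp hω with h | h
    · have := Real.exp_le_exp.mpr (mul_le_mul_of_nonneg_left h.le hβ.le)
      linarith
    · have := Real.exp_le_exp.mpr (mul_le_mul_of_nonneg_left h.le hβ.le)
      rw [mul_neg, ← neg_mul] at this
      linarith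
  rw [← ofReal_measureReal]
  refine ENNReal.ofReal_le_ofReal ((measureReal_mono hsub).trans ?_)
  rw [Real.exp_add, neg_mul, Real.exp_neg, ← mul_assoc, mul_right_comm, ← div_eq_mul_inv,
    le_div_iff₀ (Real.exp_pos _), mul_comm]
  linarith
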